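/- arXiv:2602.08813 — 3 statements merged into one kernel-verified Lean document; each statement's English description precedes it below -/
import Mathlib

section
/- Let π be a probability measure on a measurable space Y, r : Y → ℝ a bounded measurable function, and ρ > 0. Then the infimum, over all probability measures Q on Y that are absolutely continuous with respect to π and satisfy KL(Q‖π) ≤ ρ, of ∫ r dQ equals ⨆_{λ > 0} ( −λ·log(∫ exp(−r(y)/λ) dπ(y)) − λ·ρ ). -/
open MeasureTheory ProbabilityTheory

/-- The Kullback–Leibler divergence `KL(Q‖P) = ∫ log (dQ/dP) dQ` (a real number, defined
for `Q` absolutely continuous with respect to `P`). -/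
noncomputable def klDivReal {Y : Type*} [MeasurableSpace Y] (Q P : Measure Y) : ℝ :=
  ∫ y, llr Q P y ∂Q


namespace KLAux

variable {Y : Type*} [MeasurableSpace Y]

lemma integrable_bdd (μ : Measure Y) [IsFiniteMeasure μ] {f : Y → ℝ} (hf : Measurable f)
    {C : ℝ} (h : ∀ y, |f y| ≤ C) : Integrable f μ :=
  Integrable.of_bound hf.aestronglyMeasurable C (Filter.Eventually.of_forall h)

lemma bound_exp {r : Y → ℝ} {C : ℝ} (h : ∀ y, |r y| ≤ C) (b : ℝ) (y : Y) :
    |Real.exp (-(b * r y))| ≤ Real.exp (|b| * C) := by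
  rw [abs_of_pos (Real.exp_pos _), Real.exp_le_exp]
  calc -(b * r y) ≤ |b * r y| := neg_le_abs _
    _ = |b| * |r y| := abs_mul _ _
    _ ≤ |b| * C := by gcongr; exact h y

lemma integrable_exp (π : Measure Y) [IsFiniteMeasure π] {r : Y → ℝ} (hr : Measurable r)
    {C : ℝ} (h : ∀ y, |r y| ≤ C) (b : ℝ) : Integrable (fun y => Real.exp (-(b * r y))) π :=
  integrable_bdd π (by fun_prop) (bound_exp h b)

lemma weak (π : Measure Y) [IsProbabilityMeasure π] {r : Y → ℝ} (hr : Measurable r)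
    {C : ℝ} (h : ∀ y, |r y| ≤ C) (b : ℝ) (Q : Measure Y) [IsProbabilityMeasure Q] (hQ : Q ≪ π)
    (hI : Integrable (llr Q π) Q) :
    0 ≤ klDivReal Q π + b * ∫ y, r y ∂Q + Real.log (∫ y, Real.exp (-(b * r y)) ∂π) := by
  have he := integrable_exp π hr h b
  have hrQ : Integrable (fun y => -(b * r y)) Q := ((integrable_bdd Q hr h).const_mul b).neg
  have : IsProbabilityMeasure (π.tilted fun y => -(b * r y)) := isProbabilityMeasure_tilted he
  have h1 := integral_llr_tilted_right hQ hrQ he hI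
  have h2 := InformationTheory.integral_llr_add_sub_measure_univ_nonneg
    (hQ.trans (absolutelyContinuous_tilted he)) (integrable_llr_tilted_right hQ hrQ hI he)
  rw [h1] at h2
  simp only [integral_neg, integral_const_mul, probReal_univ] at h2
  unfold klDivReal
  linarith

lemma tilted_spec (π : Measure Y) [IsProbabilityMeasure π] {r : Y → ℝ} (hr : Measurable r)
    {C : ℝ} (h : ∀ y, |r y| ≤ C) (b : ℝ) :
    let Q := π.tilted fun y => -(b * r y)
    IsProbabilityMeasure Q ∧ Q ≪ π ∧ Integrable (llr Q π) Q ∧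
      klDivReal Q π = -(b * ∫ y, r y ∂Q) - Real.log (∫ y, Real.exp (-(b * r y)) ∂π) := by
  intro Q
  have he := integrable_exp π hr h b
  have : IsProbabilityMeasure Q := isProbabilityMeasure_tilted he
  have hac : Q ≪ π := tilted_absolutelyContinuous _ _
  have hrQ : Integrable (fun y => -(b * r y)) Q := ((integrable_bdd Q hr h).const_mul b).neg
  have hl : llr Q π =ᵐ[Q] fun y => -(b * r y) - Real.log (∫ y, Real.exp (-(b * r y)) ∂π) :=
    hac.ae_le (log_rnDeriv_tilted_left_self he)
  refine ⟨this, hac, (integrable_congr hl).2 (hrQ.sub (integrable_const _)), ?_⟩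
  unfold klDivReal
  rw [integral_congr_ae hl, integral_sub hrQ (integrable_const _)]
  simp [integral_neg, integral_const_mul]

lemma cont_exp (π : Measure Y) [IsProbabilityMeasure π] {r g : Y → ℝ} (hr : Measurable r)
    {C D : ℝ} (h : ∀ y, |r y| ≤ C) (hg : Measurable g) (hgD : ∀ y, |g y| ≤ D) (B : ℝ) :
    ContinuousOn (fun b : ℝ => ∫ y, Real.exp (-(b * r y)) * g y ∂π) (Set.Icc 0 B) := by
  apply continuousOn_of_dominated (bound := fun _ => Real.exp (B * C) * D)
  · intro b _
    exact (by fun_prop : Measurable fun y => Real.exp (-(b * r y)) * g y).aestronglyMeasurable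
  · intro b hb
    refine Filter.Eventually.of_forall fun y => ?_
    have hC : 0 ≤ C := (abs_nonneg _).trans (h y)
    have hbe : |Real.exp (-(b * r y))| ≤ Real.exp (B * C) := by
      refine (bound_exp h b y).trans (Real.exp_le_exp.2 ?_)
      rw [abs_of_nonneg hb.1]
      gcongr
      exact hb.2
    rw [Real.norm_eq_abs, abs_mul]
    gcongr
    exact hgD y
  · exact integrable_const _
  · refine Filter.Eventually.of_forall fun y => ?_
    fun_prop

lemma cont_kl (π : Measure Y) [IsProbabilityMeasure π] {r : Y → ℝ} (hr : Measurable r)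
    {C : ℝ} (h : ∀ y, |r y| ≤ C) (B : ℝ) :
    ContinuousOn (fun b : ℝ => klDivReal (π.tilted fun y => -(b * r y)) π) (Set.Icc 0 B) := by
  have c1 : ContinuousOn (fun b : ℝ => ∫ y, Real.exp (-(b * r y)) ∂π) (Set.Icc 0 B) := by
    simpa using cont_exp π hr h (g := fun _ => 1) (D := 1) measurable_const (by simp) B
  have c2 := cont_exp π hr h hr h B
  have hpos : ∀ b : ℝ, ∫ y, Real.exp (-(b * r y)) ∂π ≠ 0 := fun b =>
    (integral_exp_pos (integrable_exp π hr h b)).ne'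
  have key : (fun b : ℝ => klDivReal (π.tilted fun y => -(b * r y)) π) = fun b =>
      -(b * ((∫ y, Real.exp (-(b * r y)) * r y ∂π) / ∫ y, Real.exp (-(b * r y)) ∂π))
        - Real.log (∫ y, Real.exp (-(b * r y)) ∂π) := by
    funext b
    rw [(tilted_spec π hr h b).2.2.2, integral_tilted, ← integral_div]
    congr 4
    funext y
    simp only [smul_eq_mul]
    ring
  rw [key]
  exact ((continuousOn_id.mul (c2.div c1 fun b _ => hpos b)).neg).sub (c1.log fun b _ => hpos b)

end KLAux

/-- **KL specialization of Lemma 1 for a single prompt (equation (4)).**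
The worst-case expected reward over the KL ball of radius `ρ` around `π` equals the dual
entropic-risk program `⨆_{λ>0} (−λ·log ∫ exp(−r/λ) dπ − λρ)`. -/
theorem kl_ball_worst_case_reward_duality
    {Y : Type*} [MeasurableSpace Y]
    (π : Measure Y) [IsProbabilityMeasure π]
    (r : Y → ℝ) (hr_meas : Measurable r) (hr_bdd : ∃ C : ℝ, ∀ y, |r y| ≤ C)
    (ρ : ℝ) (hρ : 0 < ρ) :
    sInf {v : ℝ | ∃ Q : Measure Y, IsProbabilityMeasure Q ∧ Q ≪ π ∧
        Integrable (llr Q π) Q ∧ klDivReal Q π ≤ ρ ∧ v = ∫ y, r y ∂Q} =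
    ⨆ lam : {l : ℝ // 0 < l},
      (-(lam : ℝ) * Real.log (∫ y, Real.exp (-r y / lam) ∂π) - lam * ρ) := by
  obtain ⟨C, hC⟩ := hr_bdd
  have hre : ∀ l : ℝ, ∫ y, Real.exp (-r y / l) ∂π = ∫ y, Real.exp (-(l⁻¹ * r y)) ∂π := by
    intro l
    congr 1
    funext y
    congr 1
    ring
  have hweak : ∀ v ∈ {v : ℝ | ∃ Q : Measure Y, IsProbabilityMeasure Q ∧ Q ≪ π ∧
        Integrable (llr Q π) Q ∧ klDivReal Q π ≤ ρ ∧ v = ∫ y, r y ∂Q},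
      ∀ lam : {l : ℝ // 0 < l},
      (-(lam : ℝ) * Real.log (∫ y, Real.exp (-r y / lam) ∂π) - lam * ρ) ≤ v := by
    rintro v ⟨Q, hQ, hac, hI, hk, rfl⟩ ⟨l, hl⟩
    have := KLAux.weak π hr_meas hC l⁻¹ Q hac hI
    rw [hre]
    have h2 : 0 ≤ l * (ρ + l⁻¹ * ∫ y, r y ∂Q + Real.log (∫ y, Real.exp (-(l⁻¹ * r y)) ∂π)) :=
      mul_nonneg hl.le (by linarith)
    have h3 : l * (l⁻¹ * ∫ y, r y ∂Q) = ∫ y, r y ∂Q := by field_simp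
    dsimp only
    nlinarith
  have hmem : ∀ b : ℝ, klDivReal (π.tilted fun y => -(b * r y)) π ≤ ρ →
      (∫ y, r y ∂(π.tilted fun y => -(b * r y))) ∈
      {v : ℝ | ∃ Q : Measure Y, IsProbabilityMeasure Q ∧ Q ≪ π ∧
        Integrable (llr Q π) Q ∧ klDivReal Q π ≤ ρ ∧ v = ∫ y, r y ∂Q} := by
    intro b hb
    obtain ⟨h1, h2, h3, _⟩ := KLAux.tilted_spec π hr_meas hC b
    exact ⟨_, h1, h2, h3, hb, rfl⟩
  have h0 : klDivReal (π.tilted fun y => -((0 : ℝ) * r y)) π = 0 := by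
    rw [(KLAux.tilted_spec π hr_meas hC 0).2.2.2]
    simp
  have hne := hmem 0 (h0.trans_le hρ.le)
  have hval : ∀ l : ℝ, 0 < l → ∫ y, r y ∂(π.tilted fun y => -(l⁻¹ * r y)) =
      (-l * Real.log (∫ y, Real.exp (-r y / l) ∂π) - l * ρ)
        + l * (ρ - klDivReal (π.tilted fun y => -(l⁻¹ * r y)) π) := by
    intro l hl
    rw [(KLAux.tilted_spec π hr_meas hC l⁻¹).2.2.2, hre]
    field_simp
    ring
  generalize hS : {v : ℝ | ∃ Q : Measure Y, IsProbabilityMeasure Q ∧ Q ≪ π ∧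
        Integrable (llr Q π) Q ∧ klDivReal Q π ≤ ρ ∧ v = ∫ y, r y ∂Q} = S at *
  have : Nonempty {l : ℝ // 0 < l} := ⟨⟨1, one_pos⟩⟩
  have hbdd : BddAbove (Set.range fun lam : {l : ℝ // 0 < l} =>
      (-(lam : ℝ) * Real.log (∫ y, Real.exp (-r y / lam) ∂π) - lam * ρ)) := by
    refine ⟨∫ y, r y ∂(π.tilted fun y => -((0 : ℝ) * r y)), ?_⟩
    rintro _ ⟨lam, rfl⟩
    exact hweak _ hne lam
  have hbelow : BddBelow S := ⟨_, fun v hv => hweak v hv ⟨1, one_pos⟩⟩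
  apply le_antisymm
  · by_cases hcase : ∃ b : ℝ, 0 < b ∧ klDivReal (π.tilted fun y => -(b * r y)) π = ρ
    · obtain ⟨b, hb, hbρ⟩ := hcase
      refine (csInf_le hbelow (hmem b hbρ.le)).trans ?_
      have hv := hval b⁻¹ (inv_pos.2 hb)
      rw [inv_inv, hbρ, sub_self, mul_zero, add_zero] at hv
      rw [hv]
      exact le_ciSup hbdd ⟨b⁻¹, inv_pos.2 hb⟩
    · have hlt : ∀ b : ℝ, 0 < b → klDivReal (π.tilted fun y => -(b * r y)) π < ρ := by
        intro b hb
        by_contra hge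
        push Not at hge
        obtain ⟨c, hc, hcρ⟩ := intermediate_value_Icc hb.le (KLAux.cont_kl π hr_meas hC b)
          (show ρ ∈ Set.Icc _ _ from ⟨h0.trans_le hρ.le, hge⟩)
        refine hcase ⟨c, lt_of_le_of_ne hc.1 ?_, hcρ⟩
        rintro rfl
        exact hρ.ne' (hcρ.symm.trans h0)
      apply le_of_forall_pos_le_add
      intro ε hε
      have hl : 0 < ε / ρ := div_pos hε hρ
      refine (csInf_le hbelow (hmem (ε / ρ)⁻¹ (hlt _ (inv_pos.2 hl)).le)).trans ?_
      rw [hval _ hl]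
      have hk : 0 ≤ klDivReal (π.tilted fun y => -((ε / ρ)⁻¹ * r y)) π := by
        obtain ⟨h1, h2, h3, _⟩ := KLAux.tilted_spec π hr_meas hC (ε / ρ)⁻¹
        simpa using KLAux.weak π hr_meas hC 0 _ h2 h3
      refine add_le_add (le_ciSup hbdd ⟨ε / ρ, hl⟩) ?_
      calc ε / ρ * (ρ - klDivReal (π.tilted fun y => -((ε / ρ)⁻¹ * r y)) π) ≤ ε / ρ * ρ := by
            gcongr; linarith
        _ = ε := by field_simp
  · exact ciSup_le fun lam => le_csInf ⟨_, hne⟩ fun v hv => hweak v hv lam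
end

section
/- Let π be a probability measure on a measurable space Y and r : Y → ℝ a bounded measurable function. Then the function λ ↦ −λ·log(∫ exp(−r(y)/λ) dπ(y)) is nondecreasing on (0, ∞). -/
open MeasureTheory

/-- **Remark 2 (monotonicity): smaller `λ` is more risk-averse.** For a probability measure
`π` and bounded measurable `r`, the entropic risk `λ ↦ −λ·log ∫ exp(−r/λ) dπ` is
nondecreasing on `(0, ∞)`. -/
theorem entropic_risk_monotone_in_lambda
    {Y : Type*} [MeasurableSpace Y]
    (π : Measure Y) [IsProbabilityMeasure π]
    (r : Y → ℝ) (hr_meas : Measurable r) (hr_bdd : ∃ C : ℝ, ∀ y, |r y| ≤ C) :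
    MonotoneOn (fun lam : ℝ => -lam * Real.log (∫ y, Real.exp (-r y / lam) ∂π))
      (Set.Ioi (0 : ℝ)) := by
  obtain ⟨C, hC⟩ := hr_bdd
  have hint : ∀ l : ℝ, 0 < l → Integrable (fun y => Real.exp (-r y / l)) π := by
    intro l hl
    refine Integrable.of_bound (C := Real.exp (C / l)) ?_ ?_
    · exact (Real.measurable_exp.comp (hr_meas.neg.div_const l)).aestronglyMeasurable
    · refine Filter.Eventually.of_forall fun y => ?_
      rw [Real.norm_eq_abs, abs_of_pos (Real.exp_pos _)]
      apply Real.exp_le_exp.mpr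
      exact div_le_div_of_nonneg_right (by linarith [neg_abs_le (r y), hC y]) hl.le
  intro a ha b hb hab
  have ha' : 0 < a := ha
  have hb' : 0 < b := hb
  have hp : 1 ≤ b / a := (one_le_div ha').mpr hab
  have hpow : ∀ y, (Real.exp (-r y / b)) ^ (b / a) = Real.exp (-r y / a) := by
    intro y
    rw [← Real.exp_mul]
    congr 1
    field_simp
  have hJ := ConvexOn.map_integral_le (μ := π) (f := fun y => Real.exp (-r y / b))
    (convexOn_rpow hp)
    (Real.continuous_rpow_const (by linarith)).continuousOn isClosed_Ici
    (Filter.Eventually.of_forall fun y => (Real.exp_pos _).le) (hint b hb')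
    (by
      have := hint a ha'
      simpa only [Function.comp_def, hpow] using this)
  simp only [hpow] at hJ
  have hF : 0 < ∫ y, Real.exp (-r y / b) ∂π := integral_exp_pos (hint b hb')
  have hL := Real.log_le_log (Real.rpow_pos_of_pos hF _) hJ
  rw [Real.log_rpow hF, div_mul_eq_mul_div, div_le_iff₀ ha'] at hL
  show -a * _ ≤ -b * _
  linarith
end

section
/- Let P and Q be probability measures on a measurable space Y that are mutually absolutely continuous, let g = dQ/dP be the Radon–Nikodym derivative, and assume log g is P-integrable. Then g(y) − log g(y) − 1 ≥ 0 for P-almost every y, and ∫ ( g(y) − log g(y) − 1 ) dP(y) = KL(P‖Q). -/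
open MeasureTheory

/-- **The KL estimator of equation (2).** Let `P` and `Q` be mutually absolutely continuous
probability measures, `g = dQ/dP` the Radon–Nikodym derivative, and assume `log g` is
`P`-integrable. Then `g − log g − 1 ≥ 0` holds `P`-almost everywhere, and
`∫ (g − log g − 1) dP = KL(P‖Q)`. -/
theorem kl_estimator_nonneg_and_unbiased
    {Y : Type*} [MeasurableSpace Y]
    (P Q : Measure Y) [IsProbabilityMeasure P] [IsProbabilityMeasure Q]
    (hPQ : P ≪ Q) (hQP : Q ≪ P)
    (g : Y → ℝ) (hg : g = fun y => (Q.rnDeriv P y).toReal)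
    (h_int : Integrable (fun y => Real.log (g y)) P) :
    (∀ᵐ y ∂P, 0 ≤ g y - Real.log (g y) - 1) ∧
    ∫ y, (g y - Real.log (g y) - 1) ∂P = klDivReal P Q := by
  have hpos : ∀ᵐ y ∂P, 0 < g y := by
    filter_upwards [exp_llr_of_ac' Q P hPQ] with y hy
    rw [hg]
    simp only
    rw [← hy]
    exact Real.exp_pos _
  have hgi : Integrable g P := by
    rw [hg]
    exact Measure.integrable_toReal_rnDeriv
  have hg1 : ∫ y, g y ∂P = 1 := by
    rw [hg, Measure.integral_toReal_rnDeriv hQP]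
    simp
  refine ⟨?_, ?_⟩
  · filter_upwards [hpos] with y hy
    linarith [Real.log_le_sub_one_of_pos hy]
  · have hkl : klDivReal P Q = - ∫ y, Real.log (g y) ∂P := by
      unfold klDivReal
      rw [← integral_neg]
      apply integral_congr_ae
      filter_upwards [neg_llr hPQ] with y hy
      rw [Pi.neg_apply] at hy
      rw [hg]
      change llr P Q y = - llr Q P y
      linarith
    have hd : Integrable (fun y => g y - Real.log (g y)) P := hgi.sub h_int
    rw [hkl, integral_sub hd (integrable_const _), integral_sub hgi h_int, hg1]
    simp
end
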